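/- Let Q(x,y,z) = x³ + axyz + bxz² + cyz² + dz³ with a, b, c, d ∈ ℝ, and suppose that for every e ∈ ℝ³ the quadratic form Q_e = ∂_e Q is degenerate (its 3×3 symmetric matrix is singular). Then a = 0 and c = 0; in particular Q = x³ + bxz² + dz³ is a function of the two variables x and z. -/

import Mathlib

open MvPolynomial

/-- Directional derivative `∂ₑQ` of a polynomial `Q` in direction `e`. -/
noncomputable def dirDeriv (e : Fin 3 → ℝ) (Q : MvPolynomial (Fin 3) ℝ) :
    MvPolynomial (Fin 3) ℝ :=
  ∑ i, MvPolynomial.C (e i) * MvPolynomial.pderiv i Q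

/-- Determinant of the 3×3 Hessian matrix (of second partial derivatives) of a
polynomial `R`; for a quadratic form `R` this vanishes iff its associated symmetric
matrix is singular. -/
noncomputable def hessDet (R : MvPolynomial (Fin 3) ℝ) : ℝ :=
  Matrix.det (Matrix.of fun i j =>
    MvPolynomial.eval (0 : Fin 3 → ℝ) (MvPolynomial.pderiv i (MvPolynomial.pderiv j R)))

/-!
Since `Q` is linear in `y`, the `yy`-entry of the Hessian matrix of `∂ₑQ` vanishes for every `e`,
so its determinant has few terms. Two directions already suffice: the determinant is `-6a²` at
`e = (1, 0, 0)` and, once `a = 0`, it is `-6(2c)²` at `e = (1, 0, 1)`.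
-/

section Hessian

variable {σ R : Type*} [CommSemiring R]

/-- The Hessian matrix at the origin of a polynomial over any commutative semiring; its
determinant generalizes `hessDet`. -/
noncomputable def hessianAtZero (p : MvPolynomial σ R) : Matrix σ σ R :=
  Matrix.of fun i j => eval 0 (pderiv i (pderiv j p))

variable [Fintype σ]

/-- The derivative of a polynomial in the constant direction `e`; generalizes `dirDeriv`. -/
noncomputable def directionalDeriv (e : σ → R) (p : MvPolynomial σ R) : MvPolynomial σ R :=
  ∑ i, C (e i) * pderiv i p

/-- The quadratic form `xᵀ A x` as a polynomial. The matrix `A` need not be symmetric, so that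
forms with odd mixed coefficients are covered without dividing by `2`. -/
noncomputable def quadraticPolynomial (A : Matrix σ σ R) : MvPolynomial σ R :=
  ∑ i, ∑ j, C (A i j) * X i * X j

theorem pderiv_quadraticPolynomial (A : Matrix σ σ R) (k : σ) :
    pderiv k (quadraticPolynomial A) = ∑ i, C (A i k + A k i) * X i := by
  classical
  simp [quadraticPolynomial, Derivation.leibniz, pderiv_X, Pi.single_apply, mul_add,
    Finset.sum_add_distrib, mul_comm, add_comm]

theorem hessianAtZero_quadraticPolynomial (A : Matrix σ σ R) :
    hessianAtZero (quadraticPolynomial A) = A + A.transpose := by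
  classical
  ext i j
  simp [hessianAtZero, pderiv_quadraticPolynomial, pderiv_X, Pi.single_apply]

end Hessian

section SingularCubic

variable {S R : Type*} [CommSemiring S] [CommRing R]

/-- The cubic form `x³ + axyz + bxz² + cyz² + dz³` over any commutative semiring, with `x`, `y`,
`z` the variables `X 0`, `X 1`, `X 2`. -/
noncomputable def singularCubic (a b c d : S) : MvPolynomial (Fin 3) S :=
  X 0 ^ 3 + C a * X 0 * X 1 * X 2 + C b * X 0 * X 2 ^ 2 + C c * X 1 * X 2 ^ 2 + C d * X 2 ^ 3

theorem directionalDeriv_singularCubic (a b c d : S) (e : Fin 3 → S) :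
    directionalDeriv e (singularCubic a b c d) =
      quadraticPolynomial !![3 * e 0, a * e 2, a * e 1 + 2 * b * e 2;
                             0, 0, a * e 0 + 2 * c * e 2;
                             0, 0, b * e 0 + c * e 1 + 3 * d * e 2] := by
  have pderiv_x : pderiv 0 (singularCubic a b c d) =
      3 * X 0 ^ 2 + C a * X 1 * X 2 + C b * X 2 ^ 2 := by
    simp only [singularCubic, map_add, Derivation.leibniz, Derivation.leibniz_pow, derivation_C,
      pderiv_X_self, pderiv_X_of_ne, ne_eq, Fin.reduceEq, not_false_eq_true,
      one_ne_zero, smul_eq_mul, nsmul_eq_mul, Nat.cast_ofNat]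
    ring
  have pderiv_y : pderiv 1 (singularCubic a b c d) = C a * X 0 * X 2 + C c * X 2 ^ 2 := by
    simp only [singularCubic, map_add, Derivation.leibniz, Derivation.leibniz_pow, derivation_C,
      pderiv_X_self, pderiv_X_of_ne, ne_eq, Fin.reduceEq, not_false_eq_true,
      zero_ne_one, smul_eq_mul]
    ring
  have pderiv_z : pderiv 2 (singularCubic a b c d) =
      C a * X 0 * X 1 + 2 * C b * X 0 * X 2 + 2 * C c * X 1 * X 2 + 3 * C d * X 2 ^ 2 := by
    simp only [singularCubic, map_add, Derivation.leibniz, Derivation.leibniz_pow, derivation_C,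
      pderiv_X_self, pderiv_X_of_ne, ne_eq, Fin.reduceEq, not_false_eq_true,
      smul_eq_mul, nsmul_eq_mul, Nat.cast_ofNat]
    ring
  simp only [directionalDeriv, quadraticPolynomial, Fin.sum_univ_three, pderiv_x, pderiv_y,
    pderiv_z, Matrix.of_apply, Matrix.cons_val, C_mul, C_add, C_0, map_ofNat C]
  ring

theorem hessianAtZero_directionalDeriv_singularCubic (a b c d : S) (e : Fin 3 → S) :
    hessianAtZero (directionalDeriv e (singularCubic a b c d)) =
      !![6 * e 0, a * e 2, a * e 1 + 2 * b * e 2;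
         a * e 2, 0, a * e 0 + 2 * c * e 2;
         a * e 1 + 2 * b * e 2, a * e 0 + 2 * c * e 2,
           2 * (b * e 0 + c * e 1 + 3 * d * e 2)] := by
  rw [directionalDeriv_singularCubic, hessianAtZero_quadraticPolynomial]
  ext i j
  fin_cases i <;> fin_cases j <;>
    simp only [Fin.zero_eta, Fin.mk_one, Fin.reduceFinMk, Matrix.add_apply,
      Matrix.transpose_apply, Matrix.of_apply, Matrix.cons_val] <;> ring

theorem det_hessianAtZero_directionalDeriv_singularCubic (a b c d : R) (e : Fin 3 → R) :
    (hessianAtZero (directionalDeriv e (singularCubic a b c d))).det =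
      2 * (a * e 2) * (a * e 1 + 2 * b * e 2) * (a * e 0 + 2 * c * e 2)
        - 6 * e 0 * (a * e 0 + 2 * c * e 2) ^ 2
        - 2 * (a * e 2) ^ 2 * (b * e 0 + c * e 1 + 3 * d * e 2) := by
  rw [hessianAtZero_directionalDeriv_singularCubic, Matrix.det_fin_three]
  simp only [Matrix.of_apply, Matrix.cons_val]
  ring

theorem singular_cubic_degenerate_implies_two_variables_general [IsReduced R]
    (h_six : IsRegular (6 : R)) (a b c d : R)
    (h_x : (hessianAtZero (directionalDeriv ![1, 0, 0] (singularCubic a b c d))).det = 0)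
    (h_xz : (hessianAtZero (directionalDeriv ![1, 0, 1] (singularCubic a b c d))).det = 0) :
    a = 0 ∧ c = 0 := by
  have eq_zero_of_six_mul {r : R} : 6 * r = 0 → r = 0 := h_six.left.mul_left_eq_zero_iff.mp
  rw [det_hessianAtZero_directionalDeriv_singularCubic] at h_x h_xz
  have ha : a = 0 := by
    have h_sq : 6 * a ^ 2 = 0 := by simpa using h_x
    exact eq_zero_of_pow_eq_zero (eq_zero_of_six_mul h_sq)
  have h_two_c : 2 * c = 0 := by
    have h_sq : 6 * (2 * c) ^ 2 = 0 := by simpa [ha] using h_xz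
    exact eq_zero_of_pow_eq_zero (eq_zero_of_six_mul h_sq)
  have hc : c = 0 := eq_zero_of_six_mul (by linear_combination 3 * h_two_c)
  exact ⟨ha, hc⟩

end SingularCubic

/-- If all the directional derivatives of the singular cubic
`Q = x³ + axyz + bxz² + cyz² + dz³` are degenerate quadratic forms, then `a = 0` and
`c = 0`, so `Q = x³ + bxz² + dz³` depends only on the two variables `x, z`. -/
theorem singular_cubic_degenerate_implies_two_variables (a b c d : ℝ)
    (h_deg : ∀ e : Fin 3 → ℝ,
      hessDet (dirDeriv e
        (X 0 ^ 3 + C a * X 0 * X 1 * X 2 + C b * X 0 * X 2 ^ 2 +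
          C c * X 1 * X 2 ^ 2 + C d * X 2 ^ 3)) = 0) :
    a = 0 ∧ c = 0 :=
  singular_cubic_degenerate_implies_two_variables_general
    (IsRegular.of_ne_zero (by norm_num)) a b c d (h_deg _) (h_deg _)
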